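/- arXiv:2002.10166 — 4 statements merged into one kernel-verified Lean document; each statement's English description precedes it below -/
import Mathlib

section
/- Let (X, f) be an asymmetric normed space, nontrivial, with c(X) := sInf {f (-x) : x ∈ X, f x = 1} > 0, and let (Y, g) be any asymmetric normed space; equip X and Y with the real normed space structures of their associated norms. Then every continuous linear map T : X →L[ℝ] Y (for the associated norms) belongs to L_c(X, Y), i.e., there exists C ≥ 0 with g (T x) ≤ C * f x for all x. Consequently L_c(X, Y) coincides with the space of all continuous linear maps X →L[ℝ] Y and is a vector space. -/
/-! With `c` the index of symmetry of `f`, normalizing `-x` in the infimum gives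
`c * f (-x) ≤ f x` for every `x`. If `f x = 1`, this and `c ≤ f (-x)` give `c * c ≤ 1`, so `c ≤ 1`.
Hence `c * ‖x‖ ≤ f x`, and `g (T x) ≤ ‖T x‖ ≤ ‖T‖ * ‖x‖` gives the constant `‖T‖ / c`. -/

/-- `f` is an asymmetric norm on the real vector space `X`. -/
def IsAsymmNorm {X : Type*} [AddCommGroup X] [Module ℝ X] (f : X → ℝ) : Prop :=
  (∀ x, 0 ≤ f x) ∧ (∀ (c : ℝ), 0 ≤ c → ∀ x, f (c • x) = c * f x) ∧
  (∀ x y, f (x + y) ≤ f x + f y) ∧ (∀ x, f x = 0 → f (-x) = 0 → x = 0)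

/-- The index of symmetry `c(X)` of `X` with respect to `f`. It takes the junk value `0` if `f` does
not attain the value `1`. -/
noncomputable def indexOfSymmetry {X : Type*} [Neg X] (f : X → ℝ) : ℝ :=
  sInf ((fun x => f (-x)) '' {x | f x = 1})

section Neg

variable {X : Type*} [Neg X] {f : X → ℝ}

lemma indexOfSymmetry_nonneg (f_nonneg : ∀ x, 0 ≤ f x) : 0 ≤ indexOfSymmetry f :=
  Real.sInf_nonneg (Set.forall_mem_image.2 fun x _ => f_nonneg (-x))

lemma indexOfSymmetry_le_apply_neg (f_nonneg : ∀ x, 0 ≤ f x) {x : X} (hx : f x = 1) :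
    indexOfSymmetry f ≤ f (-x) :=
  csInf_le ⟨0, Set.forall_mem_image.2 fun y _ => f_nonneg (-y)⟩ (Set.mem_image_of_mem _ hx)

end Neg

section PositivelyHomogeneous

variable {X : Type*} [AddCommGroup X] [Module ℝ X] {f : X → ℝ}

lemma indexOfSymmetry_mul_apply_neg_le (f_nonneg : ∀ x, 0 ≤ f x)
    (f_smul : ∀ r : ℝ, 0 ≤ r → ∀ x, f (r • x) = r * f x) (x : X) :
    indexOfSymmetry f * f (-x) ≤ f x := by
  rcases (f_nonneg (-x)).eq_or_lt with h_zero | h_pos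
  · simpa only [← h_zero, mul_zero] using f_nonneg x
  have hr : 0 ≤ (f (-x))⁻¹ := inv_nonneg.2 h_pos.le
  have normalized : f ((f (-x))⁻¹ • -x) = 1 := by
    rw [f_smul _ hr, inv_mul_cancel₀ h_pos.ne']
  rw [← le_div_iff₀ h_pos]
  calc indexOfSymmetry f ≤ f (-((f (-x))⁻¹ • -x)) :=
        indexOfSymmetry_le_apply_neg f_nonneg normalized
    _ = f x / f (-x) := by rw [← smul_neg, neg_neg, f_smul _ hr, inv_mul_eq_div]

lemma indexOfSymmetry_le_one (f_nonneg : ∀ x, 0 ≤ f x)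
    (f_smul : ∀ r : ℝ, 0 ≤ r → ∀ x, f (r • x) = r * f x) : indexOfSymmetry f ≤ 1 := by
  rcases {x | f x = 1}.eq_empty_or_nonempty with h_empty | ⟨x, hx : f x = 1⟩
  · simp [indexOfSymmetry, h_empty]
  have c_nonneg := indexOfSymmetry_nonneg f_nonneg
  rw [← sq_le_one_iff₀ c_nonneg, sq]
  calc indexOfSymmetry f * indexOfSymmetry f ≤ indexOfSymmetry f * f (-x) := by
        gcongr
        exact indexOfSymmetry_le_apply_neg f_nonneg hx
    _ ≤ f x := indexOfSymmetry_mul_apply_neg_le f_nonneg f_smul x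
    _ = 1 := hx

lemma indexOfSymmetry_mul_max_le (f_nonneg : ∀ x, 0 ≤ f x)
    (f_smul : ∀ r : ℝ, 0 ≤ r → ∀ x, f (r • x) = r * f x) (x : X) :
    indexOfSymmetry f * max (f x) (f (-x)) ≤ f x := by
  rw [mul_max_of_nonneg _ _ (indexOfSymmetry_nonneg f_nonneg)]
  exact max_le (mul_le_of_le_one_left (f_nonneg x) (indexOfSymmetry_le_one f_nonneg f_smul))
    (indexOfSymmetry_mul_apply_neg_le f_nonneg f_smul x)

end PositivelyHomogeneous

theorem mem_Lc_of_index_pos_general {X Y : Type*}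
    [SeminormedAddCommGroup X] [NormedSpace ℝ X] [SeminormedAddCommGroup Y] [NormedSpace ℝ Y]
    {f : X → ℝ} {g : Y → ℝ} (f_nonneg : ∀ x, 0 ≤ f x)
    (f_smul : ∀ r : ℝ, 0 ≤ r → ∀ x, f (r • x) = r * f x)
    (norm_le : ∀ x, ‖x‖ ≤ max (f x) (f (-x))) (le_norm : ∀ y, g y ≤ ‖y‖)
    (hc : 0 < indexOfSymmetry f) (T : X →L[ℝ] Y) (x : X) :
    g (T x) ≤ ‖T‖ / indexOfSymmetry f * f x := by
  have norm_le_div : ‖x‖ ≤ f x / indexOfSymmetry f :=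
    (norm_le x).trans ((le_div_iff₀' hc).2 (indexOfSymmetry_mul_max_le f_nonneg f_smul x))
  calc g (T x) ≤ ‖T x‖ := le_norm (T x)
    _ ≤ ‖T‖ * (f x / indexOfSymmetry f) := T.le_opNorm_of_le norm_le_div
    _ = ‖T‖ / indexOfSymmetry f * f x := by ring

/-- If `c(X) > 0`, then every continuous linear map `T : X →L[ℝ] Y` (for the associated
norms) belongs to `L_c(X,Y)`, so `L_c(X,Y)` is the whole vector space `X →L[ℝ] Y`. -/
theorem mem_Lc_of_index_pos
    {X Y : Type*} [NormedAddCommGroup X] [NormedSpace ℝ X] [Nontrivial X]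
    [NormedAddCommGroup Y] [NormedSpace ℝ Y]
    (f : X → ℝ) (g : Y → ℝ) (hf : IsAsymmNorm f) (hg : IsAsymmNorm g)
    (hXnorm : ∀ x : X, ‖x‖ = max (f x) (f (-x)))
    (hYnorm : ∀ y : Y, ‖y‖ = max (g y) (g (-y)))
    (hc : 0 < sInf ((fun x => f (-x)) '' {x | f x = 1})) :
    ∀ T : X →L[ℝ] Y, ∃ C ≥ (0 : ℝ), ∀ x, g (T x) ≤ C * f x := by
  intro T
  have norm_le (x : X) : ‖x‖ ≤ max (f x) (f (-x)) := (hXnorm x).le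
  have le_norm (y : Y) : g y ≤ ‖y‖ := (le_max_left _ _).trans_eq (hYnorm y).symm
  exact ⟨‖T‖ / indexOfSymmetry f, div_nonneg (norm_nonneg T) hc.le,
    mem_Lc_of_index_pos_general hf.1 hf.2.1 norm_le le_norm hc T⟩
end

section
/- Let (X, f) and (Y, g) be asymmetric normed spaces, each carrying the real normed space structure of its associated norm. Suppose there exists a continuous linear map T : X →L[ℝ] Y with (∃ C ≥ 0, ∀ x, g (T x) ≤ C * f x) but ¬ (∃ C ≥ 0, ∀ x, g (-(T x)) ≤ C * f x). Then c(X) = 0 and c(Y) = 0; explicitly, for every ε > 0 there exists z ∈ X with f z = 1 and f (-z) < ε, and there exists y ∈ Y with g y = 1 and g (-y) < ε. -/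
/-- `f` is nonnegative and positively homogeneous, like the Minkowski functional of an absorbing
set; vectors with `f x ≠ 0` can then be normalised. Homogeneity is required only for positive
scalars, which already forces `f 0 = 0`. -/
structure IsGauge {𝕜 X : Type*} [Field 𝕜] [LinearOrder 𝕜] [AddCommGroup X] [Module 𝕜 X]
    (f : X → 𝕜) : Prop where
  nonneg : ∀ x, 0 ≤ f x
  smul_of_pos : ∀ c : 𝕜, 0 < c → ∀ x, f (c • x) = c * f x

/-- `T` is bounded from `(X, f)` to `(Y, g)`; for linear maps between asymmetric normed spaces this
is membership in the cone `L_c(X, Y)`. -/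
def IsAsymmBounded {𝕜 X Y : Type*} [Zero 𝕜] [Mul 𝕜] [LE 𝕜] (f : X → 𝕜) (g : Y → 𝕜)
    (T : X → Y) : Prop :=
  ∃ C ≥ (0 : 𝕜), ∀ x, g (T x) ≤ C * f x

/-- The condition `c(X) = 0` on `(X, f)`, spelled out without the infimum
`c(X) = inf {f (-z) | f z = 1}`, so that it fails when no `z` has `f z = 1`. -/
def IndexZero {𝕜 X : Type*} [Zero 𝕜] [One 𝕜] [LT 𝕜] [Neg X] (f : X → 𝕜) : Prop :=
  ∀ ε > (0 : 𝕜), ∃ z, f z = 1 ∧ f (-z) < ε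

lemma IsAsymmNorm.isGauge {X : Type*} [AddCommGroup X] [Module ℝ X] {f : X → ℝ}
    (hf : IsAsymmNorm f) : IsGauge f where
  nonneg := hf.1
  smul_of_pos c hc := hf.2.1 c hc.le

lemma IsAsymmBounded.comp {𝕜 X Y Z : Type*} [SemigroupWithZero 𝕜] [Preorder 𝕜] [PosMulMono 𝕜]
    {f : X → 𝕜} {g : Y → 𝕜} {h : Z → 𝕜} {S : Y → Z} {T : X → Y}
    (hS : IsAsymmBounded g h S) (hT : IsAsymmBounded f g T) : IsAsymmBounded f h (S ∘ T) := by
  obtain ⟨C, hC, hS⟩ := hS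
  obtain ⟨D, hD, hT⟩ := hT
  refine ⟨C * D, mul_nonneg hC hD, fun x ↦ ?_⟩
  calc h (S (T x)) ≤ C * g (T x) := hS (T x)
    _ ≤ C * (D * f x) := mul_le_mul_of_nonneg_left (hT x) hC
    _ = C * D * f x := (mul_assoc C D (f x)).symm

section Gauge

variable {𝕜 X Y : Type*} [Field 𝕜] [LinearOrder 𝕜] [IsStrictOrderedRing 𝕜]
  [AddCommGroup X] [Module 𝕜 X] [AddCommGroup Y] [Module 𝕜 Y] {f : X → 𝕜} {g : Y → 𝕜}

lemma IsGauge.mul_apply_neg_le (hf : IsGauge f) {ε : 𝕜} (h : ∀ z, f z = 1 → ε ≤ f (-z)) (x : X) :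
    ε * f (-x) ≤ f x := by
  rcases (hf.nonneg (-x)).eq_or_lt with h_zero | h_pos
  · simpa only [← h_zero, mul_zero] using hf.nonneg x
  · have h_inv : 0 < (f (-x))⁻¹ := inv_pos.2 h_pos
    have h_unit : f ((f (-x))⁻¹ • -x) = 1 := by
      rw [hf.smul_of_pos _ h_inv, inv_mul_cancel₀ h_pos.ne']
    have h_neg : f (-((f (-x))⁻¹ • -x)) = f x / f (-x) := by
      rw [← smul_neg, neg_neg, hf.smul_of_pos _ h_inv, inv_mul_eq_div]
    exact (le_div_iff₀ h_pos).1 (h_neg ▸ h _ h_unit)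

lemma IsGauge.isAsymmBounded_neg_of_not_indexZero (hf : IsGauge f) (h : ¬IndexZero f) :
    IsAsymmBounded f f Neg.neg := by
  unfold IndexZero at h
  push Not at h
  obtain ⟨ε, hε, h⟩ := h
  exact ⟨ε⁻¹, (inv_pos.2 hε).le, fun x ↦ (le_inv_mul_iff₀ hε).2 (hf.mul_apply_neg_le h x)⟩

theorem index_zero_of_Lc_not_vector_space_general (hf : IsGauge f) (hg : IsGauge g) {T : X → Y}
    (hT_odd : T.Odd) (hT : IsAsymmBounded f g T) (hT' : ¬IsAsymmBounded f g (-T)) :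
    IndexZero f ∧ IndexZero g := by
  constructor
  · by_contra h
    have h_comp : T ∘ Neg.neg = -T := funext hT_odd
    exact hT' (h_comp ▸ hT.comp (hf.isAsymmBounded_neg_of_not_indexZero h))
  · by_contra h
    exact hT' ((hg.isAsymmBounded_neg_of_not_indexZero h).comp hT)

end Gauge

/-- If some `T ∈ L_c(X,Y)` has `-T ∉ L_c(X,Y)`, then `c(X) = 0` and `c(Y) = 0`. -/
theorem index_zero_of_Lc_not_vector_space
    {X Y : Type*} [NormedAddCommGroup X] [NormedSpace ℝ X]
    [NormedAddCommGroup Y] [NormedSpace ℝ Y]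
    (f : X → ℝ) (g : Y → ℝ) (hf : IsAsymmNorm f) (hg : IsAsymmNorm g)
    (hXnorm : ∀ x : X, ‖x‖ = max (f x) (f (-x)))
    (hYnorm : ∀ y : Y, ‖y‖ = max (g y) (g (-y)))
    (T : X →L[ℝ] Y) (hT : ∃ C ≥ (0 : ℝ), ∀ x, g (T x) ≤ C * f x)
    (hT' : ¬ (∃ C ≥ (0 : ℝ), ∀ x, g (-(T x)) ≤ C * f x)) :
    (∀ ε > (0 : ℝ), ∃ z : X, f z = 1 ∧ f (-z) < ε) ∧
    (∀ ε > (0 : ℝ), ∃ y : Y, g y = 1 ∧ g (-y) < ε) :=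
  index_zero_of_Lc_not_vector_space_general hf.isGauge hg.isGauge (map_neg T) hT hT'
end

section
/- Let X be a nontrivial real vector space, f an asymmetric norm on X, and let X carry the real normed space structure of the associated norm ‖x‖ = max (f x) (f (-x)). Then the dual cone X^♭ := {p : X →L[ℝ] ℝ | ∃ C ≥ 0, ∀ x, p x ≤ C * f x} is closed under negation (i.e., is a vector space) if and only if sInf {f (-x) : x ∈ X, f x = 1} > 0. -/
open Filter
open scoped Topology

/-- A sublinear functional: positively homogeneous and subadditive, with no condition on its sign.
It is what remains of an asymmetric norm when positivity and separation are dropped. -/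
structure IsSublinear {X : Type*} [AddCommGroup X] [Module ℝ X] (f : X → ℝ) : Prop where
  map_smul_of_nonneg : ∀ c : ℝ, 0 ≤ c → ∀ x, f (c • x) = c * f x
  map_add_le : ∀ x y, f (x + y) ≤ f x + f y

/-- The index of symmetry `c(X)` of `(X, f)`. The infimum has the junk value `0` if `f` never takes
the value `1`, which for sublinear `f` means `f = 0`. -/
noncomputable def symmetryIndex {X : Type*} [Neg X] (f : X → ℝ) : ℝ :=
  sInf ((fun x => f (-x)) '' {x | f x = 1})

/-- The dual cone `X^♭` of `(X, f)`: the continuous linear functionals dominated by a nonnegative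
multiple of `f`. The topology of `X` need not be the one induced by `f`. -/
def dualCone {X : Type*} [AddCommGroup X] [Module ℝ X] [TopologicalSpace X] (f : X → ℝ) :
    Set (X →L[ℝ] ℝ) :=
  {p | ∃ C ≥ (0 : ℝ), ∀ x, p x ≤ C * f x}

section AddMonoidHomClass

variable {G F : Type*} [AddGroup G] [FunLike F G ℝ] [AddMonoidHomClass F G ℝ] {g : G → ℝ} {p : F}

lemma neg_map_neg_le_of_forall_le (hp : ∀ x, p x ≤ g x) (x : G) : -g (-x) ≤ p x := by
  have h := hp (-x)
  rw [map_neg] at h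
  linarith

lemma continuous_of_forall_le [TopologicalSpace G] [IsTopologicalAddGroup G]
    (hg : ContinuousAt g 0) (hg0 : g 0 = 0) (hp : ∀ x, p x ≤ g x) : Continuous p := by
  refine continuous_of_continuousAt_zero p ?_
  have hupper : Tendsto g (𝓝 0) (𝓝 0) := by
    simpa only [hg0] using hg.tendsto
  have hneg : Tendsto (fun x : G => -x) (𝓝 0) (𝓝 0) := by
    simpa only [neg_zero] using (continuous_neg (G := G)).tendsto 0
  have hlower : Tendsto (fun x => -g (-x)) (𝓝 0) (𝓝 0) := by
    simpa only [neg_zero, Function.comp_apply] using (hupper.comp hneg).neg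
  rw [ContinuousAt, map_zero]
  exact tendsto_of_tendsto_of_tendsto_of_le_of_le hlower hupper
    (neg_map_neg_le_of_forall_le hp) hp

end AddMonoidHomClass

lemma exists_linearMap_hasSum {R M N ι : Type*} [Semiring R] [AddCommMonoid M] [Module R M]
    [AddCommMonoid N] [Module R N] [TopologicalSpace N] [T2Space N] [ContinuousAdd N]
    [ContinuousConstSMul R N] {q : ι → M →ₗ[R] N} (hq : ∀ x, Summable fun i => q i x) :
    ∃ p : M →ₗ[R] N, ∀ x, HasSum (fun i => q i x) (p x) := by
  refine ⟨⟨⟨fun x => ∑' i, q i x, fun x y => ?_⟩, fun c x => ?_⟩, fun x => (hq x).hasSum⟩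
  · simp only [map_add, (hq x).tsum_add (hq y)]
  · simp only [map_smul, (hq x).tsum_const_smul, RingHom.id_apply]

lemma exists_linearMap_hasSum_mul_of_forall_le {X ι : Type*} [AddCommGroup X] [Module ℝ X]
    {g : X → ℝ} {w : ι → ℝ} (hw : ∀ i, 0 ≤ w i) (hsum : Summable w) {q : ι → X →ₗ[ℝ] ℝ}
    (hq : ∀ i x, q i x ≤ g x) :
    ∃ p : X →ₗ[ℝ] ℝ, ∀ x, HasSum (fun i => w i * q i x) (p x) := by
  refine exists_linearMap_hasSum (q := fun i => w i • q i) fun x =>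
    Summable.of_norm_bounded (hsum.mul_right (max (g x) (g (-x)))) fun i => ?_
  have habs : |q i x| ≤ max (g x) (g (-x)) :=
    abs_le'.2 ⟨le_max_of_le_left (hq i x),
      le_max_of_le_right (neg_le.1 (neg_map_neg_le_of_forall_le (hq i) x))⟩
  rw [LinearMap.smul_apply, smul_eq_mul, Real.norm_eq_abs, abs_mul, abs_of_nonneg (hw i)]
  exact mul_le_mul_of_nonneg_left habs (hw i)

namespace IsSublinear

variable {X : Type*} [AddCommGroup X] [Module ℝ X] {f : X → ℝ}

lemma map_zero (hf : IsSublinear f) : f 0 = 0 := by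
  simpa using hf.map_smul_of_nonneg 0 le_rfl 0

lemma neg_map_neg_le (hf : IsSublinear f) (x : X) : -f (-x) ≤ f x := by
  have h := hf.map_add_le x (-x)
  rw [add_neg_cancel, hf.map_zero] at h
  linarith

lemma map_inv_smul_self (hf : IsSublinear f) {x : X} (hx : 0 < f x) : f ((f x)⁻¹ • x) = 1 := by
  rw [hf.map_smul_of_nonneg _ (inv_nonneg.2 hx.le), inv_mul_cancel₀ hx.ne']

lemma exists_eq_one (hf : IsSublinear f) (hf0 : f ≠ 0) : ∃ x, f x = 1 := by
  obtain ⟨x, hx⟩ := Function.ne_iff.1 hf0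
  rcases lt_or_gt_of_ne hx with hneg | hpos
  · have hneg' : 0 < f (-x) := (neg_pos.2 hneg).trans_le (by linarith [hf.neg_map_neg_le x])
    exact ⟨_, hf.map_inv_smul_self hneg'⟩
  · exact ⟨_, hf.map_inv_smul_self hpos⟩

lemma symmetryIndex_le (hf : IsSublinear f) {x : X} (hx : f x = 1) : symmetryIndex f ≤ f (-x) := by
  refine csInf_le ⟨-1, ?_⟩ ⟨x, hx, rfl⟩
  rintro _ ⟨y, hy : f y = 1, rfl⟩
  linarith [hf.neg_map_neg_le y]

lemma symmetryIndex_mul_le (hf : IsSublinear f) (hc : 0 ≤ symmetryIndex f) (x : X) :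
    symmetryIndex f * f x ≤ f (-x) := by
  rcases le_or_gt (f x) 0 with hx | hx
  · calc symmetryIndex f * f x ≤ 0 := mul_nonpos_of_nonneg_of_nonpos hc hx
      _ ≤ f (-x) := by linarith [hf.neg_map_neg_le x]
  · have h := hf.symmetryIndex_le (hf.map_inv_smul_self hx)
    rwa [← smul_neg, hf.map_smul_of_nonneg _ (inv_nonneg.2 hx.le), inv_mul_eq_div,
      le_div_iff₀ hx] at h

lemma exists_eq_one_map_neg_lt (hf : IsSublinear f) (hf0 : f ≠ 0) {ε : ℝ}
    (hε : symmetryIndex f < ε) : ∃ x, f x = 1 ∧ f (-x) < ε := by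
  have hne : ((fun x => f (-x)) '' {x | f x = 1}).Nonempty :=
    Set.Nonempty.image _ (hf.exists_eq_one hf0)
  obtain ⟨_, ⟨x, hx, rfl⟩, hlt⟩ := exists_lt_of_csInf_lt hne hε
  exact ⟨x, hx, hlt⟩

lemma exists_linearMap_le_eq (hf : IsSublinear f) (a : X) :
    ∃ q : X →ₗ[ℝ] ℝ, (∀ x, q x ≤ f x) ∧ q a = f a := by
  have hker : ∀ c : ℝ, c • a = 0 → c • f a = 0 := fun c hc => by
    rcases smul_eq_zero.1 hc with rfl | rfl
    · exact zero_smul _ _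
    · rw [hf.map_zero, smul_zero]
  have hspan : ∀ c : ℝ, c * f a ≤ f (c • a) := fun c => by
    rcases le_total 0 c with hc | hc
    · exact (hf.map_smul_of_nonneg c hc a).ge
    · have h := hf.neg_map_neg_le (c • a)
      rwa [← neg_smul, hf.map_smul_of_nonneg _ (neg_nonneg.2 hc), neg_mul, neg_neg] at h
  obtain ⟨q, hq, hqf⟩ := exists_extension_of_le_sublinear
    (LinearPMap.mkSpanSingleton' a (f a) hker) f
    (fun c hc => hf.map_smul_of_nonneg c hc.le) hf.map_add_le (by
      rintro ⟨y, hy⟩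
      obtain ⟨c, rfl⟩ := Submodule.mem_span_singleton.1 hy
      rw [LinearPMap.mkSpanSingleton'_apply]
      exact hspan c)
  exact ⟨q, hqf, (hq ⟨a, Submodule.mem_span_singleton_self a⟩).trans
    (LinearPMap.mkSpanSingleton'_apply_self _ _ _ _)⟩

variable [TopologicalSpace X]

lemma neg_mem_dualCone (hf : IsSublinear f) (hc : 0 < symmetryIndex f) {p : X →L[ℝ] ℝ}
    (hp : p ∈ dualCone f) : -p ∈ dualCone f := by
  obtain ⟨C, hC, hpC⟩ := hp
  refine ⟨C / symmetryIndex f, by positivity, fun x => ?_⟩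
  have hindex : f (-x) ≤ f x / symmetryIndex f := by
    rw [le_div_iff₀' hc]
    simpa only [neg_neg] using hf.symmetryIndex_mul_le hc.le (-x)
  calc (-p) x = p (-x) := (map_neg p x).symm
    _ ≤ C * f (-x) := hpC (-x)
    _ ≤ C * (f x / symmetryIndex f) := mul_le_mul_of_nonneg_left hindex hC
    _ = C / symmetryIndex f * f x := by ring

variable [IsTopologicalAddGroup X]

lemma exists_mem_dualCone_forall_le (hf : IsSublinear f) (hcont : ContinuousAt f 0) {ι : Type*}
    {w : ι → ℝ} {W : ℝ} (hw : ∀ i, 0 ≤ w i) (hW : HasSum w W) (x : ι → X) :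
    ∃ p ∈ dualCone f, ∀ i, w i * (f (x i) + f (-x i)) ≤ p (x i) + W * f (-x i) := by
  choose q hqf hqx using fun i => hf.exists_linearMap_le_eq (x i)
  obtain ⟨p, hp⟩ := exists_linearMap_hasSum_mul_of_forall_le hw hW.summable hqf
  have hpf : ∀ y, p y ≤ W * f y := fun y =>
    hasSum_le (fun i => mul_le_mul_of_nonneg_left (hqf i y) (hw i)) (hp y) (hW.mul_right (f y))
  have hpcont : Continuous p :=
    continuous_of_forall_le (g := fun y => W * f y) (continuousAt_const.mul hcont)
      (by rw [hf.map_zero, mul_zero]) hpf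
  refine ⟨⟨p, hpcont⟩, ⟨W, hW.nonneg hw, hpf⟩, fun i => ?_⟩
  have hterms : HasSum (fun j => w j * (q j (x i) + f (-x i))) (p (x i) + W * f (-x i)) := by
    simpa only [mul_add] using (hp (x i)).add (hW.mul_right (f (-x i)))
  have hnonneg : ∀ j, 0 ≤ w j * (q j (x i) + f (-x i)) := fun j =>
    mul_nonneg (hw j) (by linarith [neg_map_neg_le_of_forall_le (hqf j) (x i)])
  have hterm := le_hasSum hterms i fun j _ => hnonneg j
  rwa [hqx] at hterm

lemma exists_mem_dualCone_neg_notMem (hf : IsSublinear f) (hcont : ContinuousAt f 0) (hf0 : f ≠ 0)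
    (hc : symmetryIndex f ≤ 0) : ∃ p ∈ dualCone f, -p ∉ dualCone f := by
  choose x hx hxlt using fun k : ℕ =>
    hf.exists_eq_one_map_neg_lt hf0 (hc.trans_lt (by positivity : (0 : ℝ) < (1 / 4) ^ k))
  obtain ⟨p, hp, hle⟩ := hf.exists_mem_dualCone_forall_le hcont
    (fun k => by positivity) hasSum_geometric_two x
  refine ⟨p, hp, ?_⟩
  rintro ⟨C, hC, hpC⟩
  obtain ⟨k, hk⟩ := pow_unbounded_of_one_lt (C + 2) (one_lt_two : (1 : ℝ) < 2)
  have hupper : p (x k) ≤ C * f (-x k) := by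
    simpa only [neg_apply, map_neg, neg_neg] using hpC (-x k)
  have hlower : (1 / 2 : ℝ) ^ k ≤ (C + 2 - (1 / 2) ^ k) * f (-x k) := by
    have h := hle k
    rw [hx] at h
    linarith
  have hhalf : (1 / 2 : ℝ) ^ k ≤ 1 := pow_le_one₀ (by norm_num) (by norm_num)
  have hdecay : (1 / 2 : ℝ) ^ k ≤ (C + 2) * (1 / 4) ^ k :=
    calc (1 / 2 : ℝ) ^ k ≤ (C + 2 - (1 / 2) ^ k) * f (-x k) := hlower
      _ ≤ (C + 2 - (1 / 2) ^ k) * (1 / 4) ^ k :=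
        mul_le_mul_of_nonneg_left (hxlt k).le (by linarith)
      _ ≤ (C + 2) * (1 / 4) ^ k :=
        mul_le_mul_of_nonneg_right (sub_le_self _ (by positivity)) (by positivity)
  have hpow : (2 : ℝ) ^ k ≤ C + 2 :=
    calc (2 : ℝ) ^ k = (1 / 2) ^ k * 4 ^ k := by rw [← mul_pow]; norm_num
      _ ≤ (C + 2) * (1 / 4) ^ k * 4 ^ k := mul_le_mul_of_nonneg_right hdecay (by positivity)
      _ = C + 2 := by rw [mul_assoc, ← mul_pow]; norm_num
  exact hk.not_ge hpow

end IsSublinear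

lemma IsAsymmNorm.isSublinear {X : Type*} [AddCommGroup X] [Module ℝ X] {f : X → ℝ}
    (hf : IsAsymmNorm f) : IsSublinear f :=
  ⟨hf.2.1, hf.2.2.1⟩

lemma continuousAt_zero_of_le_norm {E : Type*} [SeminormedAddGroup E] {f : E → ℝ}
    (h0 : ∀ x, 0 ≤ f x) (hle : ∀ x, f x ≤ ‖x‖) : ContinuousAt f 0 := by
  have hzero : f 0 = 0 := le_antisymm (by simpa only [norm_zero] using hle 0) (h0 0)
  rw [ContinuousAt, hzero]
  exact squeeze_zero h0 hle tendsto_norm_zero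

lemma ne_zero_of_norm_eq_max {E : Type*} [NormedAddGroup E] [Nontrivial E] {f : E → ℝ}
    (hnorm : ∀ x, ‖x‖ = max (f x) (f (-x))) : f ≠ 0 := by
  rintro rfl
  obtain ⟨x, hx⟩ := exists_ne (0 : E)
  exact hx (norm_eq_zero.1 ((hnorm x).trans (max_self 0)))

theorem dual_cone_vector_space_iff_index_pos_general
    {X : Type*} [AddCommGroup X] [Module ℝ X] [TopologicalSpace X] [IsTopologicalAddGroup X]
    {f : X → ℝ} (hf : IsSublinear f) (hcont : ContinuousAt f 0) (hf0 : f ≠ 0) :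
    (∀ p ∈ dualCone f, -p ∈ dualCone f) ↔ 0 < symmetryIndex f := by
  refine ⟨fun hneg => ?_, fun hc _ => hf.neg_mem_dualCone hc⟩
  by_contra! hc
  obtain ⟨p, hp, hnp⟩ := hf.exists_mem_dualCone_neg_notMem hcont hf0 hc
  exact hnp (hneg p hp)

/-- The dual cone `X^♭ = {p | ∃ C ≥ 0, ∀ x, p x ≤ C * f x}` is closed under negation
(i.e. is a vector space) iff `c(X) > 0`. -/
theorem dual_cone_vector_space_iff_index_pos
    {X : Type*} [NormedAddCommGroup X] [NormedSpace ℝ X] [Nontrivial X]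
    (f : X → ℝ) (hf : IsAsymmNorm f)
    (hXnorm : ∀ x : X, ‖x‖ = max (f x) (f (-x))) :
    (∀ p : X →L[ℝ] ℝ, (∃ C ≥ (0 : ℝ), ∀ x, p x ≤ C * f x) →
        (∃ C ≥ (0 : ℝ), ∀ x, (-p) x ≤ C * f x)) ↔
    0 < sInf ((fun x => f (-x)) '' {x | f x = 1}) :=
  dual_cone_vector_space_iff_index_pos_general hf.isSublinear
    (continuousAt_zero_of_le_norm hf.1 fun x => (le_max_left _ _).trans_eq (hXnorm x).symm)
    (ne_zero_of_norm_eq_max hXnorm)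
end

section
/- Let X be a nontrivial real vector space and f an asymmetric norm on X. Define f₁ : X → ℝ by f₁ x = f x + max (f x) (f (-x)). Then f₁ is an asymmetric norm on X and sInf {f₁ (-x) : x ∈ X, f₁ x = 1} > 0; moreover, if f is not symmetric (there exists x with f x ≠ f (-x)), then sInf {f₁ (-x) : x ∈ X, f₁ x = 1} < 1. -/
/-- The symmetrization of `f`, the least even function above `f`. For an asymmetric norm it is
the norm usually denoted `fˢ`. -/
def symmetrization {X : Type*} [Neg X] (f : X → ℝ) : X → ℝ :=
  fun x => max (f x) (f (-x))

/-- The index of symmetry of an asymmetric norm, as a real infimum: it takes the junk value `0`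
if `f` does not attain the value `1`. -/
noncomputable def symmIndex {X : Type*} [Neg X] (f : X → ℝ) : ℝ :=
  sInf ((fun x => f (-x)) '' {x | f x = 1})

lemma le_symmetrization {X : Type*} [Neg X] (f : X → ℝ) : f ≤ symmetrization f :=
  fun _ => le_max_left _ _

lemma even_symmetrization {X : Type*} [InvolutiveNeg X] (f : X → ℝ) :
    Function.Even (symmetrization f) := fun x => by
  simp only [symmetrization, neg_neg, max_comm]

lemma even_add_iff_left {α β : Type*} [Neg α] [Add β] [IsRightCancelAdd β] {f g : α → β}
    (even_g : Function.Even g) : Function.Even (f + g) ↔ Function.Even f :=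
  forall_congr' fun x => by rw [Pi.add_apply, Pi.add_apply, even_g x, add_left_inj]

namespace IsAsymmNorm

variable {X : Type*} [AddCommGroup X] [Module ℝ X] {f g : X → ℝ}

lemma nonneg (hf : IsAsymmNorm f) (x : X) : 0 ≤ f x := hf.1 x

lemma map_smul_of_nonneg (hf : IsAsymmNorm f) {c : ℝ} (hc : 0 ≤ c) (x : X) :
    f (c • x) = c * f x := hf.2.1 c hc x

lemma map_add_le (hf : IsAsymmNorm f) (x y : X) : f (x + y) ≤ f x + f y := hf.2.2.1 x y

lemma eq_zero (hf : IsAsymmNorm f) {x : X} (hx : f x = 0) (hnx : f (-x) = 0) : x = 0 :=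
  hf.2.2.2 x hx hnx

protected lemma add (hf : IsAsymmNorm f) (hg : IsAsymmNorm g) : IsAsymmNorm (f + g) := by
  have left_eq_zero {x : X} (h : f x + g x = 0) : f x = 0 :=
    ((add_eq_zero_iff_of_nonneg (hf.nonneg x) (hg.nonneg x)).1 h).1
  refine ⟨fun x => add_nonneg (hf.nonneg x) (hg.nonneg x), fun c hc x => ?_, fun x y => ?_,
    fun x hx hnx => hf.eq_zero (left_eq_zero hx) (left_eq_zero hnx)⟩
  · simp only [Pi.add_apply, hf.map_smul_of_nonneg hc, hg.map_smul_of_nonneg hc, mul_add]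
  · exact (add_le_add (hf.map_add_le x y) (hg.map_add_le x y)).trans_eq (add_add_add_comm ..)

protected lemma sup (hf : IsAsymmNorm f) (hg : IsAsymmNorm g) : IsAsymmNorm (f ⊔ g) := by
  have left_eq_zero {x : X} (h : f x ⊔ g x = 0) : f x = 0 :=
    le_antisymm (le_sup_left.trans_eq h) (hf.nonneg x)
  refine ⟨fun x => le_sup_of_le_left (hf.nonneg x), fun c hc x => ?_, fun x y => ?_,
    fun x hx hnx => hf.eq_zero (left_eq_zero hx) (left_eq_zero hnx)⟩
  · simp only [Pi.sup_apply, hf.map_smul_of_nonneg hc, hg.map_smul_of_nonneg hc,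
      mul_max_of_nonneg _ _ hc]
  · exact sup_le ((hf.map_add_le x y).trans (add_le_add le_sup_left le_sup_left))
      ((hg.map_add_le x y).trans (add_le_add le_sup_right le_sup_right))

lemma comp_neg (hf : IsAsymmNorm f) : IsAsymmNorm fun x => f (-x) := by
  refine ⟨fun x => hf.nonneg (-x), fun c hc x => ?_, fun x y => ?_,
    fun x hx hnx => neg_eq_zero.1 (hf.eq_zero hx hnx)⟩
  · simp only [← smul_neg, hf.map_smul_of_nonneg hc]
  · simpa only [neg_add] using hf.map_add_le (-x) (-y)

protected lemma symmetrization (hf : IsAsymmNorm f) : IsAsymmNorm (symmetrization f) :=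
  hf.sup hf.comp_neg

lemma map_inv_smul_self (hf : IsAsymmNorm f) {x : X} (hx : 0 < f x) : f ((f x)⁻¹ • x) = 1 := by
  rw [hf.map_smul_of_nonneg (inv_nonneg.2 hx.le), inv_mul_cancel₀ hx.ne']

lemma exists_pos [Nontrivial X] (hf : IsAsymmNorm f) : ∃ x, 0 < f x := by
  obtain ⟨x, hx⟩ := exists_ne (0 : X)
  by_contra! hle
  have eq_zero_apply (y : X) : f y = 0 := le_antisymm (hle y) (hf.nonneg y)
  exact hx (hf.eq_zero (eq_zero_apply x) (eq_zero_apply (-x)))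

lemma le_symmIndex_iff [Nontrivial X] (hf : IsAsymmNorm f) {c : ℝ} :
    c ≤ symmIndex f ↔ ∀ x, c * f x ≤ f (-x) := by
  have bddBelow : BddBelow ((fun x => f (-x)) '' {x | f x = 1}) :=
    ⟨0, Set.forall_mem_image.2 fun x _ => hf.nonneg (-x)⟩
  have nonempty : {x | f x = 1}.Nonempty :=
    let ⟨_, hx⟩ := hf.exists_pos
    ⟨_, hf.map_inv_smul_self hx⟩
  rw [symmIndex, le_csInf_iff bddBelow (nonempty.image _), Set.forall_mem_image]
  refine ⟨fun h x => ?_, fun h x hx => ?_⟩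
  · rcases (hf.nonneg x).eq_or_lt with hx | hx
    · rw [← hx, mul_zero]
      exact hf.nonneg (-x)
    · have bound : c ≤ f (-((f x)⁻¹ • x)) := h (hf.map_inv_smul_self hx)
      rwa [← smul_neg, hf.map_smul_of_nonneg (inv_nonneg.2 hx.le), le_inv_mul_iff₀' hx] at bound
  · simpa only [hx.out, mul_one] using h x

lemma symmIndex_lt_one_iff [Nontrivial X] (hf : IsAsymmNorm f) :
    symmIndex f < 1 ↔ ¬ Function.Even f := by
  rw [← not_le, hf.le_symmIndex_iff, not_iff_not]
  simp only [one_mul]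
  refine ⟨fun h x => le_antisymm ?_ (h x), fun h x => (h x).ge⟩
  simpa only [neg_neg] using h (-x)

lemma half_le_symmIndex_add [Nontrivial X] (hf : IsAsymmNorm f) (hg : IsAsymmNorm g)
    (even_g : Function.Even g) (hfg : f ≤ g) : 1 / 2 ≤ symmIndex (f + g) := by
  refine (hf.add hg).le_symmIndex_iff.2 fun x => ?_
  calc 1 / 2 * (f x + g x) ≤ g x := by linarith [hfg x]
    _ = g (-x) := (even_g x).symm
    _ ≤ f (-x) + g (-x) := le_add_of_nonneg_left (hf.nonneg (-x))

end IsAsymmNorm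

/-- For an asymmetric norm `f`, the map `f₁ x = f x + max (f x) (f (-x))` is an
asymmetric norm with positive index of symmetry; moreover, if `f` is not symmetric,
then the index of symmetry of `f₁` is `< 1`. -/
theorem new_asymm_norm_index_pos
    {X : Type*} [AddCommGroup X] [Module ℝ X] [Nontrivial X]
    (f : X → ℝ) (hf : IsAsymmNorm f) :
    IsAsymmNorm (fun x => f x + max (f x) (f (-x))) ∧
    0 < sInf ((fun x => f (-x) + max (f (-x)) (f x)) ''
        {x | f x + max (f x) (f (-x)) = 1}) ∧
    ((∃ x : X, f x ≠ f (-x)) →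
      sInf ((fun x => f (-x) + max (f (-x)) (f x)) ''
        {x | f x + max (f x) (f (-x)) = 1}) < 1) := by
  have hf₁ : IsAsymmNorm (f + symmetrization f) := hf.add hf.symmetrization
  have index_eq : sInf ((fun x => f (-x) + max (f (-x)) (f x)) ''
      {x | f x + max (f x) (f (-x)) = 1}) = symmIndex (f + symmetrization f) := by
    simp only [symmIndex, symmetrization, Pi.add_apply, neg_neg]
  rw [index_eq]
  refine ⟨hf₁, ?_, fun ⟨x, hx⟩ => ?_⟩
  · exact one_half_pos.trans_le
      (hf.half_le_symmIndex_add hf.symmetrization (even_symmetrization f) (le_symmetrization f))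
  · rw [hf₁.symmIndex_lt_one_iff, even_add_iff_left (even_symmetrization f)]
    exact fun even_f => hx (even_f x).symm
end
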